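/- Let ξ be the generic n×n Grassmann matrix over the exterior algebra Λ on generators ξ_{i,j} (i,j = 1,…,n), and set t_i := tr(ξ^{2i−1}) for i = 1,…,n. Then the relation n·ξ^{2n−1} = Σ_{i=0}^{n−1} ξ^{2i} · t_{n−i} holds in Mₙ(Λ), where t_n = tr(ξ^{2n−1}); equivalently t_n·I = n·ξ^{2n−1} − Σ_{i=1}^{n−1} ξ^{2i}·t_{n−i}. -/

import Mathlib

/-- The generic `n × n` Grassmann matrix: the matrix whose `(i,j)` entry is the generator
`ξ_{i,j}` of the exterior algebra on an `n²`-dimensional vector space with basis indexed by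
pairs `(i,j)`. -/
noncomputable def genericGrassmannMatrix (F : Type*) [Field F] (n : ℕ) :
    Matrix (Fin n) (Fin n) (ExteriorAlgebra F ((Fin n × Fin n) → F)) :=
  fun i j => ExteriorAlgebra.ι F (Pi.single (i, j) 1)

/-! If `x * y = -(y * x)` for all entries `x`, `y` of `ξ`, then `A = ξ² + ε ξ` over the dual numbers
has pairwise commuting entries, so Newton's identities and the Cayley–Hamilton theorem apply to it.
Since `tr ξ²ᵏ = 0` for `k > 0`, we get `tr Aᵏ = k ε tr ξ²ᵏ⁻¹`. Products of two such traces vanish,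
so Newton's identities become linear and say that, with `n` the size of `ξ` and `0 < k ≤ n`, the
coefficient of `X^(n - k)` in the characteristic polynomial of `A` is `-ε tr ξ²ᵏ⁻¹`. As
`Aⁱ = ξ²ⁱ + i ε ξ²ⁱ⁻¹`, the relation is the coefficient of `ε` in the Cayley–Hamilton theorem for
`A`. -/

section

open Matrix Polynomial TrivSqZeroExt
open scoped DualNumber

section CharacteristicPolynomial

variable {m R : Type*} [Fintype m] [DecidableEq m] [CommRing R]

theorem derivative_det_eq_trace_adjugate_mul (M : Matrix m m R[X]) :
    derivative M.det = (M.adjugate * M.map derivative).trace := by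
  have derivative_columnwise : derivative M.det
      = ∑ i, (M.updateCol i fun j => derivative (M j i)).det := by
    simp only [det_apply', derivative_sum]
    rw [Finset.sum_comm]
    refine Finset.sum_congr rfl fun σ _ => ?_
    rw [← Finset.mul_sum, derivative_intCast_mul, derivative_prod_finset]
    refine congrArg _ (Finset.sum_congr rfl fun i hi => ?_)
    rw [← Finset.mul_prod_erase Finset.univ _ hi, mul_comm, updateCol_self]
    refine congrArg _ (Finset.prod_congr rfl fun j hj => ?_)
    rw [updateCol_ne (Finset.ne_of_mem_erase hj)]
  rw [derivative_columnwise]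
  refine Finset.sum_congr rfl fun i _ => ?_
  rw [← cramer_apply, cramer_eq_adjugate_mulVec]
  rfl

theorem derivative_charpoly_eq_trace_adjugate (A : Matrix m m R) :
    derivative A.charpoly = (adjugate (charmatrix A)).trace := by
  have map_charmatrix : (charmatrix A).map derivative = 1 := by
    ext1 i j
    obtain rfl | h := eq_or_ne i j <;> simp [*]
  rw [charpoly, derivative_det_eq_trace_adjugate_mul, map_charmatrix, mul_one]

theorem coeff_adjugate_charmatrix (A : Matrix m m R) (k : ℕ) :
    (matPolyEquiv (adjugate (charmatrix A))).coeff k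
      = A.charpoly.coeff (k + 1) • (1 : Matrix m m R)
        + (matPolyEquiv (adjugate (charmatrix A))).coeff (k + 1) * A := by
  have h : matPolyEquiv (adjugate (charmatrix A)) * (X - C A)
      = A.charpoly.map (algebraMap R (Matrix m m R)) := by
    rw [← matPolyEquiv_charmatrix, ← map_mul, adjugate_mul, ← matPolyEquiv_smul_one, charpoly]
  have hcoeff := congrArg (coeff · (k + 1)) h
  simp only [mul_sub, coeff_sub, coeff_mul_X, coeff_mul_C, coeff_map] at hcoeff
  rw [← Algebra.algebraMap_eq_smul_one, ← hcoeff, sub_add_cancel]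

theorem coeff_adjugate_charmatrix_eq_sum_add (A : Matrix m m R) (k N : ℕ) :
    (matPolyEquiv (adjugate (charmatrix A))).coeff k
      = ∑ j ∈ Finset.range N, A.charpoly.coeff (k + 1 + j) • A ^ j
        + (matPolyEquiv (adjugate (charmatrix A))).coeff (k + N) * A ^ N := by
  induction N with
  | zero => simp
  | succ N ih =>
    rw [ih, Finset.sum_range_succ, coeff_adjugate_charmatrix A (k + N), add_mul, smul_one_mul,
      mul_assoc, ← pow_succ', add_right_comm k 1 N, ← add_assoc, ← add_assoc k N 1]

theorem charpoly_coeff_card (A : Matrix m m R) : A.charpoly.coeff (Fintype.card m) = 1 := by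
  nontriviality R
  simpa only [charpoly_natDegree_eq_dim] using A.charpoly_monic.coeff_natDegree

theorem charpoly_coeff_eq_zero_of_card_lt (A : Matrix m m R) {k : ℕ} (hk : Fintype.card m < k) :
    A.charpoly.coeff k = 0 := by
  nontriviality R
  exact coeff_eq_zero_of_natDegree_lt (by rwa [charpoly_natDegree_eq_dim])

theorem coeff_adjugate_charmatrix_eq_sum (A : Matrix m m R) (k : ℕ) :
    (matPolyEquiv (adjugate (charmatrix A))).coeff k
      = ∑ j ∈ Finset.range (Fintype.card m + 1), A.charpoly.coeff (k + 1 + j) • A ^ j := by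
  set B := matPolyEquiv (adjugate (charmatrix A)) with hB
  have h := coeff_adjugate_charmatrix_eq_sum_add A k (Fintype.card m + 1 + B.natDegree)
  rw [← hB, B.coeff_eq_zero_of_natDegree_lt (n := k + _) (by lia), zero_mul, add_zero] at h
  rw [h]
  refine (Finset.sum_subset (Finset.range_mono le_self_add) fun j _ hj => ?_).symm
  rw [charpoly_coeff_eq_zero_of_card_lt A (by grind), zero_smul]

/-- Newton's identities. The term `j = 0` is `Fintype.card m • A.charpoly.coeff k`, and the terms
with `k + j` beyond the degree vanish. -/
theorem nsmul_charpoly_coeff_eq_sum (A : Matrix m m R) (k : ℕ) :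
    k • A.charpoly.coeff k
      = ∑ j ∈ Finset.range (Fintype.card m + 1), A.charpoly.coeff (k + j) * (A ^ j).trace := by
  cases k with
  | zero =>
    nontriviality R
    have h := congrArg trace (aeval_self_charpoly A)
    rw [aeval_eq_sum_range, charpoly_natDegree_eq_dim, trace_sum] at h
    simpa using h.symm
  | succ k =>
    have h : (derivative A.charpoly).coeff k
        = ((matPolyEquiv (adjugate (charmatrix A))).coeff k).trace := by
      simp only [derivative_charpoly_eq_trace_adjugate, trace, diag, finsetSum_coeff,
        matPolyEquiv_coeff_apply]
    rw [coeff_derivative, coeff_adjugate_charmatrix_eq_sum, trace_sum] at h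
    rw [nsmul_eq_mul, mul_comm, Nat.cast_succ, h]
    simp only [trace_smul, smul_eq_mul]

theorem nsmul_charpoly_coeff_eq_neg_trace [IsAddTorsionFree R] (A : Matrix m m R)
    (hA : ∀ i j, i ≠ 0 → j ≠ 0 → (A ^ i).trace * (A ^ j).trace = 0)
    {k : ℕ} (hk : k < Fintype.card m) :
    (Fintype.card m - k) • A.charpoly.coeff k = -(A ^ (Fintype.card m - k)).trace := by
  induction hd : Fintype.card m - k using Nat.strong_induction_on generalizing k with
  | _ d ih =>
  -- By induction `(d - j) c_{k+j}` is minus a trace, so it annihilates traces; cancel `d - j`.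
  have coeff_mul_trace (j : ℕ) (hj : j ≠ 0) (hjd : j < d) :
      A.charpoly.coeff (k + j) * (A ^ j).trace = 0 := by
    refine (nsmul_eq_zero_iff_right (show d - j ≠ 0 by lia)).1 ?_
    rw [← smul_mul_assoc, ih (d - j) (by lia) (k := k + j) (by lia) (by lia), neg_mul,
      hA _ _ (by lia) hj, neg_zero]
  have newton := nsmul_charpoly_coeff_eq_sum A k
  rw [Finset.sum_range_succ', Finset.sum_eq_single_of_mem (d - 1) (by grind)] at newton
  · rw [Nat.sub_add_cancel (by lia), show k + d = Fintype.card m by lia, charpoly_coeff_card,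
      one_mul, add_zero, pow_zero, trace_one, mul_comm, ← nsmul_eq_mul,
      show Fintype.card m = k + d by lia, add_smul] at newton
    linear_combination -newton
  · intro j _ hj
    rcases lt_or_ge (j + 1) d with hjd | hjd
    · exact coeff_mul_trace _ j.succ_ne_zero hjd
    · rw [charpoly_coeff_eq_zero_of_card_lt A (by lia), zero_mul]

theorem pow_card_eq_neg_sum_pow_mul_charpoly_coeff (A : Matrix m m R) :
    A ^ Fintype.card m
      = -∑ k ∈ Finset.range (Fintype.card m), A ^ k * scalar m (A.charpoly.coeff k) := by
  nontriviality R
  have h := aeval_self_charpoly A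
  rw [aeval_eq_sum_range, charpoly_natDegree_eq_dim, Finset.sum_range_succ, charpoly_coeff_card,
    one_smul, add_comm] at h
  simpa only [← smul_eq_mul_diagonal, scalar_apply] using eq_neg_of_add_eq_zero_left h

end CharacteristicPolynomial

section CommutingEntries

variable {m : Type*} [Fintype m] [DecidableEq m]

open scoped IsMulCommutative in
theorem pow_card_eq_sum_of_trace_mul_trace_eq_zero {S : Type*} [Ring S] [IsAddTorsionFree S]
    (A : Matrix m m S) (hcomm : ∀ i j k l, Commute (A i j) (A k l)) (s : ℕ → S)
    (hs : ∀ k, k ≠ 0 → (A ^ k).trace = k • s k)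
    (hA : ∀ i j, i ≠ 0 → j ≠ 0 → (A ^ i).trace * (A ^ j).trace = 0) :
    A ^ Fintype.card m
      = ∑ k ∈ Finset.range (Fintype.card m), A ^ k * scalar m (s (Fintype.card m - k)) := by
  let R := Subring.closure (Set.range fun p : m × m => A p.1 p.2)
  have : IsMulCommutative R := Subring.isMulCommutative_closure <| by
    rintro _ ⟨p, rfl⟩ _ ⟨q, rfl⟩
    exact hcomm _ _ _ _
  have : IsAddTorsionFree R := inferInstanceAs (IsAddTorsionFree R.toAddSubgroup)
  let B : Matrix m m R := of fun i j => ⟨A i j, Subring.subset_closure ⟨(i, j), rfl⟩⟩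
  have map_pow_B (k : ℕ) : (B ^ k).map R.subtype = A ^ k := map_pow R.subtype.mapMatrix B k
  have trace_pow_B (k : ℕ) : ((B ^ k).trace : S) = (A ^ k).trace := by
    rw [← map_pow_B]
    exact AddMonoidHom.map_trace R.subtype.toAddMonoidHom (B ^ k)
  have coeff_B (k : ℕ) (hk : k < Fintype.card m) :
      (B.charpoly.coeff k : S) = -s (Fintype.card m - k) := by
    have hd : Fintype.card m - k ≠ 0 := by lia
    have h := nsmul_charpoly_coeff_eq_neg_trace B
      (fun i j hi hj => Subtype.ext <| by simpa [trace_pow_B] using hA i j hi hj) hk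
    refine nsmul_right_injective hd ?_
    simpa [trace_pow_B, hs _ hd] using congrArg ((↑) : R → S) h
  ext i j
  have pow_apply (k : ℕ) : (A ^ k) i j = ((B ^ k) i j : S) := by rw [← map_pow_B]; rfl
  rw [pow_apply, pow_card_eq_neg_sum_pow_mul_charpoly_coeff B]
  simp only [Matrix.neg_apply, Matrix.sum_apply, scalar_apply, mul_diagonal, pow_apply,
    NegMemClass.coe_neg, AddSubmonoidClass.coe_finsetSum, MulMemClass.coe_mul,
    ← Finset.sum_neg_distrib]
  refine Finset.sum_congr rfl fun k hk => ?_
  rw [coeff_B k (Finset.mem_range.1 hk), mul_neg, neg_neg]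

theorem semiconjBy_pow_apply {S : Type*} [Semiring S] {x : S} {A B : Matrix m m S}
    (h : ∀ i j, SemiconjBy x (A i j) (B i j)) (k : ℕ) (i j : m) :
    SemiconjBy x ((A ^ k) i j) ((B ^ k) i j) := by
  have hscalar : SemiconjBy (scalar m x) A B := by
    ext i j
    simpa [scalar_apply] using (h i j).eq
  simpa [scalar_apply, SemiconjBy] using congrFun₂ (hscalar.pow_right k).eq i j

end CommutingEntries

section DualNumber

variable {m L : Type*}

instance {R M : Type*} [AddMonoid R] [AddMonoid M] [IsAddTorsionFree R] [IsAddTorsionFree M] :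
    IsAddTorsionFree (TrivSqZeroExt R M) :=
  inferInstanceAs (IsAddTorsionFree (R × M))

/-- The matrix `P + ε Q` over the dual numbers: the first-order deformation of `P` in the
direction `Q`. It is encoded as a matrix of dual numbers, not as a dual number of matrices, so that
it has a characteristic polynomial when its entries commute. -/
def addEps [AddZeroClass L] (P Q : Matrix m m L) : Matrix m m L[ε] :=
  of fun i j => inl (P i j) + inr (Q i j)

@[simp]
theorem fst_addEps [AddZeroClass L] (P Q : Matrix m m L) (i j : m) :
    (addEps P Q i j).fst = P i j :=
  add_zero _

@[simp]
theorem snd_addEps [AddZeroClass L] (P Q : Matrix m m L) (i j : m) :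
    (addEps P Q i j).snd = Q i j :=
  zero_add _

variable [Semiring L]

theorem addEps_one_zero [DecidableEq m] : addEps (1 : Matrix m m L) 0 = 1 := by
  ext i j <;> obtain rfl | h := eq_or_ne i j <;> simp [*]

variable [Fintype m]

theorem addEps_mul (P Q P' Q' : Matrix m m L) :
    addEps P Q * addEps P' Q' = addEps (P * P') (P * Q' + Q * P') := by
  ext i j <;> simp [mul_apply, fst_sum, snd_sum, Finset.sum_add_distrib]

theorem addEps_pow [DecidableEq m] {P Q : Matrix m m L} (h : Commute P Q) (k : ℕ) :
    addEps P Q ^ k = addEps (P ^ k) (k • (P ^ (k - 1) * Q)) := by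
  induction k with
  | zero => simp [addEps_one_zero]
  | succ k ih =>
    rw [pow_succ, ih, addEps_mul]
    rcases k with _ | k
    · simp
    · simp only [Nat.add_sub_cancel]
      rw [smul_mul_assoc, mul_assoc, ← h.eq, ← mul_assoc, ← pow_succ, ← pow_succ, ← succ_nsmul']

theorem trace_addEps (P Q : Matrix m m L) :
    (addEps P Q).trace = inl P.trace + inr Q.trace := by
  ext <;> simp [trace, fst_sum, snd_sum]

end DualNumber

section Anticommuting

theorem trace_mul_eq_neg_trace_mul_of_anticomm {m S : Type*} [Fintype m] [NonUnitalNonAssocRing S]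
    {A B : Matrix m m S} (h : ∀ i j, A i j * B j i = -(B j i * A i j)) :
    (A * B).trace = -(B * A).trace := by
  simp only [trace, diag, mul_apply, h, Finset.sum_neg_distrib]
  rw [Finset.sum_comm]

variable {m L : Type*} [Fintype m] [DecidableEq m] [Ring L] {ξ : Matrix m m L}

theorem mul_pow_apply_of_anticomm (hξ : ∀ i j k l, ξ i j * ξ k l = -(ξ k l * ξ i j))
    (n : ℕ) (i j k l : m) : ξ i j * (ξ ^ n) k l = (-1) ^ n * ((ξ ^ n) k l * ξ i j) := by
  have h : SemiconjBy (ξ i j) ((ξ ^ n) k l) (((-ξ) ^ n) k l) :=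
    semiconjBy_pow_apply (fun k l => by simp [SemiconjBy, hξ i j k l]) n k l
  obtain hn | hn := n.even_or_odd <;> simpa [hn.neg_pow] using h.eq

theorem trace_pow_eq_zero_of_anticomm [IsAddTorsionFree L]
    (hξ : ∀ i j k l, ξ i j * ξ k l = -(ξ k l * ξ i j)) {n : ℕ} (hn : Even n) (hn₀ : n ≠ 0) :
    (ξ ^ n).trace = 0 := by
  obtain ⟨n, rfl⟩ := Nat.exists_eq_succ_of_ne_zero hn₀
  have hodd : Odd n := by grind
  refine self_eq_neg.1 ?_
  nth_rw 1 [pow_succ', pow_succ]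
  refine trace_mul_eq_neg_trace_mul_of_anticomm fun i j => ?_
  rw [mul_pow_apply_of_anticomm hξ, hodd.neg_one_pow, neg_one_mul]

theorem commute_addEps_sq_of_anticomm (hξ : ∀ i j k l, ξ i j * ξ k l = -(ξ k l * ξ i j))
    (i j k l : m) : Commute (addEps (ξ ^ 2) ξ i j) (addEps (ξ ^ 2) ξ k l) := by
  have hsq (i j k l : m) : Commute ((ξ ^ 2) i j) (ξ k l) := by
    simpa [Commute, SemiconjBy] using (mul_pow_apply_of_anticomm hξ 2 k l i j).symm
  have hsq_sq : Commute ((ξ ^ 2) i j) ((ξ ^ 2) k l) := semiconjBy_pow_apply (hsq i j) 2 k l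
  ext
  · simpa using hsq_sq.eq
  · simp [(hsq i j k l).eq, (hsq k l i j).eq, add_comm]

end Anticommuting

theorem genericGrassmannMatrix_missing_generator_relation_general {m L : Type*} [Fintype m]
    [DecidableEq m] [Ring L] [IsAddTorsionFree L] (ξ : Matrix m m L)
    (hξ : ∀ i j k l, ξ i j * ξ k l = -(ξ k l * ξ i j)) :
    Fintype.card m • ξ ^ (2 * Fintype.card m - 1)
      = ∑ i ∈ Finset.range (Fintype.card m),
          ξ ^ (2 * i) * scalar m (ξ ^ (2 * (Fintype.card m - i) - 1)).trace := by
  have pow_eq (k : ℕ) : addEps (ξ ^ 2) ξ ^ k = addEps (ξ ^ (2 * k)) (k • ξ ^ (2 * k - 1)) := by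
    rw [addEps_pow (.pow_self ξ 2), ← pow_mul, ← pow_mul, ← pow_succ]
    obtain rfl | hk := eq_or_ne k 0
    · simp
    · rw [show 2 * (k - 1) + 1 = 2 * k - 1 by lia]
  have trace_eq (k : ℕ) (hk : k ≠ 0) :
      (addEps (ξ ^ 2) ξ ^ k).trace = k • inr (ξ ^ (2 * k - 1)).trace := by
    rw [pow_eq, trace_addEps, trace_pow_eq_zero_of_anticomm hξ (by simp) (by lia), inl_zero,
      zero_add, trace_smul, inr_smul]
  have h := pow_card_eq_sum_of_trace_mul_trace_eq_zero (addEps (ξ ^ 2) ξ)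
    (commute_addEps_sq_of_anticomm hξ) (fun k => inr (ξ ^ (2 * k - 1)).trace) trace_eq
    (fun i j hi hj => by
      rw [trace_eq i hi, trace_eq j hj, smul_mul_smul_comm, inr_mul_inr, smul_zero])
  ext i j
  have hij := congrArg snd (congrFun₂ h i j)
  simpa only [pow_eq, Matrix.sum_apply, snd_sum, scalar_apply, mul_diagonal, snd_mul, snd_addEps,
    fst_addEps, fst_inr, snd_inr, MulOpposite.op_zero, zero_smul, add_zero, smul_eq_mul] using hij

end

/-- With `ξ` the generic `n × n` Grassmann matrix and `t_j := tr(ξ^{2j−1})`, the relation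
`n·ξ^{2n−1} = Σ_{i=0}^{n−1} ξ^{2i} · t_{n−i}` holds in `Mₙ(Λ)` (Lemma 4.3 of
Brešar–Procesi–Špenko). -/
theorem genericGrassmannMatrix_missing_generator_relation
    (F : Type*) [Field F] [CharZero F] (n : ℕ) (hn : 0 < n) :
    (n : ℕ) • (genericGrassmannMatrix F n) ^ (2 * n - 1)
      = ∑ i ∈ Finset.range n,
          (genericGrassmannMatrix F n) ^ (2 * i) *
            Matrix.scalar (Fin n)
              (((genericGrassmannMatrix F n) ^ (2 * (n - i) - 1)).trace) := by
  have : IsAddTorsionFree (ExteriorAlgebra F (Fin n × Fin n → F)) := .of_isTorsionFree F _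
  simpa only [Fintype.card_fin] using
    genericGrassmannMatrix_missing_generator_relation_general (genericGrassmannMatrix F n)
      fun _ _ _ _ => eq_neg_of_add_eq_zero_left (ExteriorAlgebra.ι_add_mul_swap _ _)
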